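/- There exists a constant s₀ > 0, independent of m, with the following property: for every integer m ≥ 1 and every axially symmetric function f that is continuously differentiable on a neighborhood of the closure of D_m and satisfies either (i) f = 0 on the horizontal boundary ∂^H D_m, or (ii) ∫_{D_m ∩ {r = c}} f(c, x₃) dx₃ = 0 for every c ∈ (2^{-m}, 1), one has (∫_{D_m} |f|⁶ dx)^{1/6} ≤ s₀ (∫_{D_m} |∇f|² dx)^{1/2}. -/

import Mathlib

noncomputable section

open Real MeasureTheory Set

/-- Inner radius of the `j`-th rectangle: `r_j = 2^(-j)`. -/
def rW (j : ℕ) : ℝ := (2 : ℝ) ^ (-(j : ℝ))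

/-- Height of the `j`-th rectangle: `h_j = 2^(-β (j-1))`. -/
def hH (β : ℝ) (j : ℕ) : ℝ := (2 : ℝ) ^ (-β * ((j : ℝ) - 1))

/-- The rectangle `S_j` in the `(r, x₃)` cross-section. -/
def Srect (β : ℝ) (j : ℕ) : Set (ℝ × ℝ) :=
  {p : ℝ × ℝ | rW j ≤ p.1 ∧ p.1 < rW (j - 1) ∧ 0 < p.2 ∧ p.2 < hH β j}

/-- The `(r, x₃)` cross-section of the domain `D_m`. -/
def Ddom (β : ℝ) (m : ℕ) : Set (ℝ × ℝ) := ⋃ j ∈ Finset.Icc 1 m, Srect β j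

/-- The horizontal part `∂^H D_m` of the boundary of `D_m` (where `x₃` is locally constant). -/
def bdH (β : ℝ) (m : ℕ) : Set (ℝ × ℝ) :=
  {p : ℝ × ℝ | p.2 = 0 ∧ rW m ≤ p.1 ∧ p.1 ≤ 1} ∪
    ⋃ j ∈ Finset.Icc 1 m,
      {p : ℝ × ℝ | p.2 = hH β j ∧ rW j ≤ p.1 ∧ p.1 ≤ rW (j - 1)}

/-- The vertical part `∂^V D_m` of the boundary of `D_m` (where `r` is locally constant). -/
def bdV (β : ℝ) (m : ℕ) : Set (ℝ × ℝ) :=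
  {p : ℝ × ℝ | p.1 = 1 ∧ 0 ≤ p.2 ∧ p.2 ≤ 1} ∪
    {p : ℝ × ℝ | p.1 = rW m ∧ 0 ≤ p.2 ∧ p.2 ≤ hH β m} ∪
    ⋃ j ∈ Finset.Icc 1 (m - 1),
      {p : ℝ × ℝ | p.1 = rW j ∧ hH β (j + 1) ≤ p.2 ∧ p.2 ≤ hH β j}

/-- The full boundary `∂ D_m` of `D_m`. -/
def bdD (β : ℝ) (m : ℕ) : Set (ℝ × ℝ) := bdH β m ∪ bdV β m

/-- The corner points of the polygonal cross-section of `D_m`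
(i.e. the corner circles of the 3D domain). -/
def cornerSet (β : ℝ) (m : ℕ) : Set (ℝ × ℝ) :=
  ({(rW m, 0), ((1 : ℝ), 0), ((1 : ℝ), (1 : ℝ)), (rW m, hH β m)} : Set (ℝ × ℝ)) ∪
    ⋃ j ∈ Finset.Icc 1 (m - 1),
      ({(rW j, hH β j), (rW j, hH β (j + 1))} : Set (ℝ × ℝ))

/-- Radial partial derivative `∂_r`. -/
def pdr (F : ℝ × ℝ → ℝ) (p : ℝ × ℝ) : ℝ := deriv (fun r => F (r, p.2)) p.1

/-- Vertical partial derivative `∂_{x₃}`. -/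
def pdz (F : ℝ × ℝ → ℝ) (p : ℝ × ℝ) : ℝ := deriv (fun z => F (p.1, z)) p.2

/-- The axially symmetric Laplacian `Δ = ∂_r² + (1/r) ∂_r + ∂_{x₃}²`. -/
def cylLap (F : ℝ × ℝ → ℝ) (p : ℝ × ℝ) : ℝ :=
  pdr (pdr F) p + (1 / p.1) * pdr F p + pdz (pdz F) p

/-- The integral of an axially symmetric function over the 3-dimensional domain `D_m`,
computed in the cross-section: `∫_{D_m} f dx = 2π ∬ F r dr dx₃`. -/
def cylIntegral (β : ℝ) (m : ℕ) (F : ℝ × ℝ → ℝ) : ℝ :=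
  ∫ p in Ddom β m, F p * (2 * π * p.1)

/-- The vertical cross-section segment `D_m ∩ {r = c}` of the cross-section. -/
def vertSeg (β : ℝ) (m : ℕ) (c : ℝ) : Set ℝ := {z : ℝ | (c, z) ∈ Ddom β m}

/-!
On each rectangle `S_j`, whose height is at most twice its width, `F` vanishes somewhere on every
vertical segment. Hence a power `F ^ (k + 1)` is bounded at `(r, z)` both by the integral of its
`x₃`-derivative over the vertical line and by the mean plus the integral of its `r`-derivative over
the horizontal line; multiplying the two bounds and integrating gives
`‖F ^ (k + 1)‖₂² ≲ ‖F ^ k‖₂² ‖∇F‖₂²`. With the Poincaré inequality for `k = 0`, two such steps give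
`∫ F ^ 6 ≲ w ^ 2 (∫ |∇F|²) ^ 3` on a rectangle of width `w`. The weight `2πr` is comparable to `w`
on `S_j`, so it contributes one factor `w` on the left and `w ^ 3` on the right and the powers of
`w` cancel. The estimate thus holds on every `S_j` with one constant, and it sums over `j` because
`∑ e_j ^ 3 ≤ (∑ e_j) ^ 3`.
-/

lemma sum_pow_succ_le_pow_succ_sum {ι R : Type*} [CommSemiring R] [PartialOrder R]
    [IsOrderedRing R] {s : Finset ι} {e : ι → R} (he : ∀ i ∈ s, 0 ≤ e i) (n : ℕ) :
    ∑ i ∈ s, e i ^ (n + 1) ≤ (∑ i ∈ s, e i) ^ (n + 1) := by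
  simp only [pow_succ _ n, Finset.mul_sum]
  refine Finset.sum_le_sum fun i hi ↦ ?_
  gcongr
  · exact he i hi
  · exact he i hi
  · exact Finset.single_le_sum he hi

lemma integral_abs_mul_le_sqrt_mul_sqrt {α : Type*} [MeasurableSpace α] {μ : Measure α}
    {f g : α → ℝ} (hf : MemLp f 2 μ) (hg : MemLp g 2 μ) :
    ∫ x, |f x * g x| ∂μ ≤ √(∫ x, f x ^ 2 ∂μ) * √(∫ x, g x ^ 2 ∂μ) := by
  have holder := integral_mul_norm_le_Lp_mul_Lq (μ := μ) (f := f) (g := g)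
    Real.HolderConjugate.two_two (by simpa using hf) (by simpa using hg)
  simpa only [abs_mul, Real.sqrt_eq_rpow, Real.norm_eq_abs, Real.rpow_ofNat, sq_abs] using holder

/-- Gagliardo's argument: each bound on `u` is independent of one variable, so by Fubini their
product integrates to the product of the integrals. -/
lemma integral_sq_le_integral_mul_integral {α β : Type*} [MeasurableSpace α] [MeasurableSpace β]
    {μ : Measure α} {ν : Measure β} [SFinite μ] [SFinite ν] {u A B : α × β → ℝ}
    (hA : Integrable A (μ.prod ν)) (hB : Integrable B (μ.prod ν))
    (huA : ∀ᵐ p ∂μ.prod ν, |u p| ≤ ∫ s, A (s, p.2) ∂μ)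
    (huB : ∀ᵐ p ∂μ.prod ν, |u p| ≤ ∫ t, B (p.1, t) ∂ν) :
    ∫ p, u p ^ 2 ∂μ.prod ν ≤ (∫ p, A p ∂μ.prod ν) * ∫ p, B p ∂μ.prod ν := by
  calc ∫ p, u p ^ 2 ∂μ.prod ν
      ≤ ∫ p, (∫ t, B (p.1, t) ∂ν) * (∫ s, A (s, p.2) ∂μ) ∂μ.prod ν := by
        refine integral_mono_of_nonneg (.of_forall fun p ↦ sq_nonneg _)
          (hB.integral_prod_left.mul_prod hA.integral_prod_right) ?_
        filter_upwards [huA, huB] with p hpA hpB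
        rw [← sq_abs, sq]
        exact mul_le_mul hpB hpA (abs_nonneg _) ((abs_nonneg _).trans hpB)
    _ = (∫ p, A p ∂μ.prod ν) * ∫ p, B p ∂μ.prod ν := by
        rw [integral_prod_mul (fun r ↦ ∫ t, B (r, t) ∂ν) (fun z ↦ ∫ s, A (s, z) ∂μ),
          ← integral_prod _ hB, ← integral_prod_symm _ hA, mul_comm]

section Interval

variable {E : Type*} [NormedAddCommGroup E] [NormedSpace ℝ E] {g : ℝ → E} {a b x y : ℝ}

lemma norm_sub_le_setIntegral_norm_deriv (hg : ContinuousOn g (Icc a b))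
    (hd : DifferentiableOn ℝ g (Ioo a b)) (hi : IntegrableOn (deriv g) (Icc a b))
    (hx : x ∈ Icc a b) (hy : y ∈ Icc a b) :
    ‖g x - g y‖ ≤ ∫ t in Icc a b, ‖deriv g t‖ := by
  wlog hyx : y ≤ x generalizing x y
  · rw [norm_sub_rev]
    exact this hy hx (le_of_not_ge hyx)
  have hsub : Icc y x ⊆ Icc a b := Icc_subset_Icc hy.1 hx.2
  calc ‖g x - g y‖
      ≤ ∫ t in y..x, ‖deriv g t‖ :=
        norm_sub_le_integral_of_norm_deriv_le_of_le hyx (hg.mono hsub)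
          (hd.mono (Ioo_subset_Ioo hy.1 hx.2)) (.of_forall fun _ _ ↦ le_rfl)
          ((intervalIntegrable_iff_integrableOn_Icc_of_le hyx).2 (hi.mono_set hsub).norm)
    _ = ∫ t in Icc y x, ‖deriv g t‖ := by
        rw [intervalIntegral.integral_of_le hyx, integral_Icc_eq_integral_Ioc]
    _ ≤ ∫ t in Icc a b, ‖deriv g t‖ :=
        setIntegral_mono_set hi.norm (.of_forall fun _ ↦ norm_nonneg _) hsub.eventuallyLE

lemma norm_le_setIntegral_div_add (hab : a < b) (hg : ContinuousOn g (Icc a b))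
    (hd : DifferentiableOn ℝ g (Ioo a b)) (hi : IntegrableOn (deriv g) (Icc a b))
    (hx : x ∈ Icc a b) :
    ‖g x‖ ≤ (∫ t in Icc a b, ‖g t‖) / (b - a) + ∫ t in Icc a b, ‖deriv g t‖ := by
  set V := ∫ t in Icc a b, ‖deriv g t‖
  have hconst (C : ℝ) : ∫ _ in Icc a b, C = (b - a) * C := by
    rw [setIntegral_const, Real.volume_real_Icc_of_le hab.le, smul_eq_mul]
  have hmean : (b - a) * (‖g x‖ - V) ≤ ∫ t in Icc a b, ‖g t‖ := by
    rw [← hconst]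
    refine setIntegral_mono_on (integrableOn_const (by simp)) hg.norm.integrableOn_Icc
      measurableSet_Icc fun t ht ↦ ?_
    linarith [norm_sub_le_setIntegral_norm_deriv hg hd hi hx ht, norm_sub_norm_le (g x) (g t)]
  rw [← sub_le_iff_le_add, le_div_iff₀ (sub_pos.2 hab), mul_comm]
  exact hmean

end Interval

lemma setIntegral_sq_le_of_exists_eq_zero {g : ℝ → ℝ} {a b : ℝ} (hg : ContinuousOn g (Icc a b))
    (hd : DifferentiableOn ℝ g (Ioo a b)) (hi : MemLp (deriv g) 2 (volume.restrict (Icc a b)))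
    (hz : ∃ z ∈ Icc a b, g z = 0) :
    ∫ x in Icc a b, g x ^ 2 ≤ (b - a) ^ 2 * ∫ x in Icc a b, deriv g x ^ 2 := by
  obtain ⟨z, hzmem, hgz⟩ := hz
  have hab : a ≤ b := hzmem.1.trans hzmem.2
  set E := ∫ x in Icc a b, deriv g x ^ 2
  have hE : 0 ≤ E := integral_nonneg fun _ ↦ sq_nonneg _
  have hvol : volume.real (Icc a b) = b - a := Real.volume_real_Icc_of_le hab
  have htotal : ∫ t in Icc a b, |deriv g t| ≤ √E * √(b - a) := by
    simpa [hvol] using integral_abs_mul_le_sqrt_mul_sqrt hi (memLp_const (1 : ℝ))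
  have hpoint : ∀ x ∈ Icc a b, g x ^ 2 ≤ E * (b - a) := by
    intro x hx
    have hsub := norm_sub_le_setIntegral_norm_deriv hg hd (hi.integrable one_le_two) hx hzmem
    rw [hgz, sub_zero] at hsub
    rw [← sq_abs, ← Real.sq_sqrt hE, ← Real.sq_sqrt (sub_nonneg.2 hab), ← mul_pow]
    exact pow_le_pow_left₀ (abs_nonneg _) (hsub.trans htotal) 2
  calc ∫ x in Icc a b, g x ^ 2
      ≤ ∫ _ in Icc a b, E * (b - a) :=
        setIntegral_mono_on (hg.pow 2).integrableOn_Icc (integrableOn_const (by simp))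
          measurableSet_Icc hpoint
    _ = (b - a) ^ 2 * E := by
        rw [setIntegral_const, hvol, smul_eq_mul]
        ring

lemma exists_mem_Ioo_eq_zero_of_integral_eq_zero {g : ℝ → ℝ} {a b : ℝ} (hab : a < b)
    (hg : ContinuousOn g (Icc a b)) (hmean : ∫ x in Ioo a b, g x = 0) :
    ∃ x ∈ Ioo a b, g x = 0 := by
  obtain ⟨x, hx, hgx⟩ := exists_eq_setAverage (μ := volume) (isConnected_Ioo hab)
    (hg.mono Ioo_subset_Icc_self) (hg.integrableOn_Icc.mono_set Ioo_subset_Icc_self)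
    (by simp) (by simpa using hab)
  exact ⟨x, hx, by rw [hgx, setAverage_eq, hmean, smul_zero]⟩

section PartialDerivatives

variable {F : ℝ × ℝ → ℝ} {p : ℝ × ℝ} {s : Set (ℝ × ℝ)}

lemma differentiableAt_horizontal_slice (hF : DifferentiableAt ℝ F p) :
    DifferentiableAt ℝ (fun r ↦ F (r, p.2)) p.1 :=
  DifferentiableAt.comp (f := fun r : ℝ ↦ (r, p.2)) p.1 hF (by fun_prop)

lemma differentiableAt_vertical_slice (hF : DifferentiableAt ℝ F p) :
    DifferentiableAt ℝ (fun z ↦ F (p.1, z)) p.2 :=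
  DifferentiableAt.comp (f := fun z : ℝ ↦ (p.1, z)) p.2 hF (by fun_prop)

lemma pdr_eq_fderiv (hF : DifferentiableAt ℝ F p) : pdr F p = fderiv ℝ F p (1, 0) :=
  (hF.hasFDerivAt.comp_hasDerivAt (f := fun r : ℝ ↦ (r, p.2)) p.1
    ((hasDerivAt_id p.1).prodMk (hasDerivAt_const p.1 p.2))).deriv

lemma pdz_eq_fderiv (hF : DifferentiableAt ℝ F p) : pdz F p = fderiv ℝ F p (0, 1) :=
  (hF.hasFDerivAt.comp_hasDerivAt (f := fun z : ℝ ↦ (p.1, z)) p.2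
    ((hasDerivAt_const p.2 p.1).prodMk (hasDerivAt_id p.2))).deriv

lemma pdr_pow (hF : DifferentiableAt ℝ F p) (n : ℕ) :
    pdr (fun q ↦ F q ^ n) p = n * F p ^ (n - 1) * pdr F p :=
  deriv_fun_pow (differentiableAt_horizontal_slice hF) n

lemma pdz_pow (hF : DifferentiableAt ℝ F p) (n : ℕ) :
    pdz (fun q ↦ F q ^ n) p = n * F p ^ (n - 1) * pdz F p :=
  deriv_fun_pow (differentiableAt_vertical_slice hF) n

lemma continuousOn_of_forall_contDiffAt (hF : ∀ p ∈ s, ContDiffAt ℝ 1 F p) : ContinuousOn F s :=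
  fun p hp ↦ (hF p hp).continuousAt.continuousWithinAt

lemma continuousOn_fderiv_of_forall_contDiffAt (hF : ∀ p ∈ s, ContDiffAt ℝ 1 F p) :
    ContinuousOn (fderiv ℝ F) s := fun p hp ↦
  ((hF p hp).fderiv_right (m := 0) (by norm_num)).continuousAt.continuousWithinAt

lemma continuousOn_pdr (hF : ∀ p ∈ s, ContDiffAt ℝ 1 F p) : ContinuousOn (pdr F) s :=
  ((continuousOn_fderiv_of_forall_contDiffAt hF).clm_apply continuousOn_const).congr
    fun p hp ↦ pdr_eq_fderiv ((hF p hp).differentiableAt one_ne_zero)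

lemma continuousOn_pdz (hF : ∀ p ∈ s, ContDiffAt ℝ 1 F p) : ContinuousOn (pdz F) s :=
  ((continuousOn_fderiv_of_forall_contDiffAt hF).clm_apply continuousOn_const).congr
    fun p hp ↦ pdz_eq_fderiv ((hF p hp).differentiableAt one_ne_zero)

/-- The energy density `|∇f|²` of the axially symmetric function `f(x) = F(r, x₃)`. -/
def gradSq (F : ℝ × ℝ → ℝ) (p : ℝ × ℝ) : ℝ := pdr F p ^ 2 + pdz F p ^ 2

lemma gradSq_nonneg (F : ℝ × ℝ → ℝ) (p : ℝ × ℝ) : 0 ≤ gradSq F p := by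
  unfold gradSq
  positivity

lemma continuousOn_gradSq (hF : ∀ p ∈ s, ContDiffAt ℝ 1 F p) : ContinuousOn (gradSq F) s :=
  ((continuousOn_pdr hF).pow 2).add ((continuousOn_pdz hF).pow 2)

end PartialDerivatives

section Rectangle

variable {F : ℝ × ℝ → ℝ} {a b c d : ℝ}

lemma integrableOn_rectangle {g : ℝ × ℝ → ℝ} (hg : ContinuousOn g (Icc a b ×ˢ Icc c d)) :
    IntegrableOn g (Icc a b ×ˢ Icc c d) :=
  hg.integrableOn_compact (isCompact_Icc.prod isCompact_Icc)

lemma setIntegral_pdr_sq_le_gradSq (hF : ∀ p ∈ Icc a b ×ˢ Icc c d, ContDiffAt ℝ 1 F p) :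
    ∫ p in Icc a b ×ˢ Icc c d, pdr F p ^ 2 ≤ ∫ p in Icc a b ×ˢ Icc c d, gradSq F p :=
  integral_mono (integrableOn_rectangle ((continuousOn_pdr hF).pow 2))
    (integrableOn_rectangle (continuousOn_gradSq hF))
    fun p ↦ le_add_of_nonneg_right (sq_nonneg (pdz F p))

lemma setIntegral_pdz_sq_le_gradSq (hF : ∀ p ∈ Icc a b ×ˢ Icc c d, ContDiffAt ℝ 1 F p) :
    ∫ p in Icc a b ×ˢ Icc c d, pdz F p ^ 2 ≤ ∫ p in Icc a b ×ˢ Icc c d, gradSq F p :=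
  integral_mono (integrableOn_rectangle ((continuousOn_pdz hF).pow 2))
    (integrableOn_rectangle (continuousOn_gradSq hF))
    fun p ↦ le_add_of_nonneg_left (sq_nonneg (pdr F p))

lemma continuousOn_horizontal_slice {g : ℝ × ℝ → ℝ} {s t : Set ℝ} {z : ℝ}
    (hg : ContinuousOn g (s ×ˢ t)) (hz : z ∈ t) : ContinuousOn (fun r ↦ g (r, z)) s :=
  hg.comp (by fun_prop) fun _ hr ↦ ⟨hr, hz⟩

lemma continuousOn_vertical_slice {g : ℝ × ℝ → ℝ} {s t : Set ℝ} {r : ℝ}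
    (hg : ContinuousOn g (s ×ˢ t)) (hr : r ∈ s) : ContinuousOn (fun z ↦ g (r, z)) t :=
  hg.comp (by fun_prop) fun _ hz ↦ ⟨hr, hz⟩

lemma abs_le_setIntegral_horizontal_slice (hab : a < b)
    (hF : ∀ p ∈ Icc a b ×ˢ Icc c d, ContDiffAt ℝ 1 F p) {r z : ℝ} (hr : r ∈ Icc a b)
    (hz : z ∈ Icc c d) :
    |F (r, z)| ≤ ∫ s in Icc a b, (|F (s, z)| / (b - a) + |pdr F (s, z)|) := by
  have hcont := continuousOn_horizontal_slice (continuousOn_of_forall_contDiffAt hF) hz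
  have hcont' := continuousOn_horizontal_slice (continuousOn_pdr hF) hz
  rw [integral_add (hcont.abs.div_const _).integrableOn_Icc hcont'.abs.integrableOn_Icc,
    integral_div]
  exact norm_le_setIntegral_div_add hab hcont
    (fun s hs ↦ (differentiableAt_horizontal_slice (p := (s, z))
      ((hF _ ⟨Ioo_subset_Icc_self hs, hz⟩).differentiableAt one_ne_zero)).differentiableWithinAt)
    hcont'.integrableOn_Icc hr

lemma differentiableOn_vertical_slice (hF : ∀ p ∈ Icc a b ×ˢ Icc c d, ContDiffAt ℝ 1 F p)
    {r : ℝ} (hr : r ∈ Icc a b) : DifferentiableOn ℝ (fun z ↦ F (r, z)) (Ioo c d) := fun z hz ↦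
  (differentiableAt_vertical_slice (p := (r, z))
    ((hF _ ⟨hr, Ioo_subset_Icc_self hz⟩).differentiableAt one_ne_zero)).differentiableWithinAt

lemma abs_le_setIntegral_vertical_slice (hF : ∀ p ∈ Icc a b ×ˢ Icc c d, ContDiffAt ℝ 1 F p)
    {r z : ℝ} (hr : r ∈ Icc a b) (hz : z ∈ Icc c d) (hzero : ∃ z ∈ Icc c d, F (r, z) = 0) :
    |F (r, z)| ≤ ∫ t in Icc c d, |pdz F (r, t)| := by
  obtain ⟨z₀, hz₀, hFz₀⟩ := hzero
  have hsub := norm_sub_le_setIntegral_norm_deriv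
    (continuousOn_vertical_slice (continuousOn_of_forall_contDiffAt hF) hr)
    (differentiableOn_vertical_slice hF hr)
    (continuousOn_vertical_slice (continuousOn_pdz hF) hr).integrableOn_Icc hz hz₀
  rw [hFz₀, sub_zero] at hsub
  exact hsub

lemma setIntegral_sq_le_mul_setIntegral_abs_pdz (hab : a < b)
    (hF : ∀ p ∈ Icc a b ×ˢ Icc c d, ContDiffAt ℝ 1 F p)
    (hzero : ∀ᵐ r ∂volume.restrict (Icc a b), ∃ z ∈ Icc c d, F (r, z) = 0) :
    ∫ p in Icc a b ×ˢ Icc c d, F p ^ 2 ≤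
      ((∫ p in Icc a b ×ˢ Icc c d, |F p|) / (b - a) + ∫ p in Icc a b ×ˢ Icc c d, |pdr F p|) *
        ∫ p in Icc a b ×ˢ Icc c d, |pdz F p| := by
  have hFint :=
    (integrableOn_rectangle (continuousOn_of_forall_contDiffAt hF).abs).div_const (b - a)
  have hrint := integrableOn_rectangle (continuousOn_pdr hF).abs
  have hzint := integrableOn_rectangle (continuousOn_pdz hF).abs
  rw [← integral_div, ← integral_add hFint hrint]
  have hmem : ∀ᵐ p ∂volume.restrict (Icc a b ×ˢ Icc c d), p ∈ Icc a b ×ˢ Icc c d :=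
    ae_restrict_mem (measurableSet_Icc.prod measurableSet_Icc)
  simp only [IntegrableOn, Measure.volume_eq_prod, ← Measure.prod_restrict]
    at hFint hrint hzint hmem ⊢
  refine integral_sq_le_integral_mul_integral (hFint.add hrint) hzint ?_ ?_
  · filter_upwards [hmem] with p hp
    exact abs_le_setIntegral_horizontal_slice hab hF hp.1 hp.2
  · filter_upwards [hmem, Measure.quasiMeasurePreserving_fst.ae hzero] with p hp hpzero
    exact abs_le_setIntegral_vertical_slice hF hp.1 hp.2 hpzero

lemma setIntegral_sq_le_setIntegral_pdz_sq (hF : ∀ p ∈ Icc a b ×ˢ Icc c d, ContDiffAt ℝ 1 F p)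
    (hzero : ∀ᵐ r ∂volume.restrict (Icc a b), ∃ z ∈ Icc c d, F (r, z) = 0) :
    ∫ p in Icc a b ×ˢ Icc c d, F p ^ 2 ≤ (d - c) ^ 2 * ∫ p in Icc a b ×ˢ Icc c d, pdz F p ^ 2 := by
  have hFcont := continuousOn_of_forall_contDiffAt hF
  have hFint := integrableOn_rectangle (hFcont.fun_pow 2)
  have hzint := integrableOn_rectangle ((continuousOn_pdz hF).fun_pow 2)
  simp only [IntegrableOn, Measure.volume_eq_prod, ← Measure.prod_restrict] at hFint hzint ⊢
  rw [integral_prod _ hFint, integral_prod _ hzint, ← integral_const_mul]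
  refine integral_mono_ae hFint.integral_prod_left (hzint.integral_prod_left.const_mul _) ?_
  filter_upwards [ae_restrict_mem measurableSet_Icc, hzero] with r hr hrzero
  have hcont' := continuousOn_vertical_slice (continuousOn_pdz hF) hr
  exact setIntegral_sq_le_of_exists_eq_zero (continuousOn_vertical_slice hFcont hr)
    (differentiableOn_vertical_slice hF hr)
    ((memLp_two_iff_integrable_sq
      (hcont'.aestronglyMeasurable measurableSet_Icc)).2 (hcont'.pow 2).integrableOn_Icc) hrzero

lemma setIntegral_sq_le_gradSq (hF : ∀ p ∈ Icc a b ×ˢ Icc c d, ContDiffAt ℝ 1 F p)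
    (hzero : ∀ᵐ r ∂volume.restrict (Icc a b), ∃ z ∈ Icc c d, F (r, z) = 0) :
    ∫ p in Icc a b ×ˢ Icc c d, F p ^ 2 ≤ (d - c) ^ 2 * ∫ p in Icc a b ×ˢ Icc c d, gradSq F p :=
  (setIntegral_sq_le_setIntegral_pdz_sq hF hzero).trans
    (mul_le_mul_of_nonneg_left (setIntegral_pdz_sq_le_gradSq hF) (sq_nonneg _))

lemma setIntegral_abs_le_mul_sqrt_mul_sqrt {f g v : ℝ × ℝ → ℝ} {C E : ℝ}
    (hf : ContinuousOn f (Icc a b ×ˢ Icc c d)) (hg : ContinuousOn g (Icc a b ×ˢ Icc c d))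
    (hv : ∀ p ∈ Icc a b ×ˢ Icc c d, v p = f p * g p) (hC : 0 ≤ C)
    (hgE : ∫ p in Icc a b ×ˢ Icc c d, g p ^ 2 ≤ C ^ 2 * E) :
    ∫ p in Icc a b ×ˢ Icc c d, |v p| ≤ C * (√(∫ p in Icc a b ×ˢ Icc c d, f p ^ 2) * √E) := by
  set R := Icc a b ×ˢ Icc c d
  have hR : MeasurableSet R := measurableSet_Icc.prod measurableSet_Icc
  have hmemLp {u : ℝ × ℝ → ℝ} (hu : ContinuousOn u R) : MemLp u 2 (volume.restrict R) :=
    (memLp_two_iff_integrable_sq (hu.aestronglyMeasurable hR)).2 (integrableOn_rectangle (hu.pow 2))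
  calc ∫ p in R, |v p|
      = ∫ p in R, |f p * g p| := setIntegral_congr_fun hR fun p hp ↦ congrArg abs (hv p hp)
    _ ≤ √(∫ p in R, f p ^ 2) * √(∫ p in R, g p ^ 2) :=
        integral_abs_mul_le_sqrt_mul_sqrt (hmemLp hf) (hmemLp hg)
    _ ≤ √(∫ p in R, f p ^ 2) * √(C ^ 2 * E) := by gcongr
    _ = C * (√(∫ p in R, f p ^ 2) * √E) := by
        rw [Real.sqrt_mul (sq_nonneg C), Real.sqrt_sq hC]
        ring

lemma setIntegral_pow_succ_sq_le (hab : a < b) (hcd : c ≤ d)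
    (hF : ∀ p ∈ Icc a b ×ˢ Icc c d, ContDiffAt ℝ 1 F p)
    (hzero : ∀ᵐ r ∂volume.restrict (Icc a b), ∃ z ∈ Icc c d, F (r, z) = 0) (k : ℕ) :
    ∫ p in Icc a b ×ˢ Icc c d, (F p ^ (k + 1)) ^ 2 ≤
      (k + 1) * (k + 1 + (d - c) / (b - a)) *
        ((∫ p in Icc a b ×ˢ Icc c d, (F p ^ k) ^ 2) * ∫ p in Icc a b ×ˢ Icc c d, gradSq F p) := by
  set R := Icc a b ×ˢ Icc c d
  set M := ∫ p in R, (F p ^ k) ^ 2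
  set E := ∫ p in R, gradSq F p
  have hE : 0 ≤ E := integral_nonneg (gradSq_nonneg F)
  have hM : 0 ≤ M := integral_nonneg fun _ ↦ sq_nonneg _
  have : 0 < b - a := sub_pos.2 hab
  have hFcont : ContinuousOn F R := continuousOn_of_forall_contDiffAt hF
  have hdiff (p) (hp : p ∈ R) : DifferentiableAt ℝ F p := (hF p hp).differentiableAt one_ne_zero
  have hvalue : ∫ p in R, |F p ^ (k + 1)| ≤ (d - c) * (√M * √E) :=
    setIntegral_abs_le_mul_sqrt_mul_sqrt (hFcont.pow k) hFcont (fun p _ ↦ pow_succ (F p) k)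
      (sub_nonneg.2 hcd) (setIntegral_sq_le_gradSq hF hzero)
  have hderiv {D v : ℝ × ℝ → ℝ} (hD : ContinuousOn D R) (hDE : ∫ p in R, D p ^ 2 ≤ E)
      (hv : ∀ p ∈ R, v p = (k + 1 : ℕ) * F p ^ k * D p) :
      ∫ p in R, |v p| ≤ (k + 1) * (√M * √E) := by
    refine setIntegral_abs_le_mul_sqrt_mul_sqrt (hFcont.pow k) (hD.const_mul (k + 1 : ℝ))
      (fun p hp ↦ by rw [hv p hp, Nat.cast_succ]; ring) (by positivity) ?_
    simp only [mul_pow, integral_const_mul]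
    gcongr
  have hradial : ∫ p in R, |pdr (fun q ↦ F q ^ (k + 1)) p| ≤ (k + 1) * (√M * √E) :=
    hderiv (continuousOn_pdr hF) (setIntegral_pdr_sq_le_gradSq hF)
      fun p hp ↦ pdr_pow (hdiff p hp) (k + 1)
  have hvertical : ∫ p in R, |pdz (fun q ↦ F q ^ (k + 1)) p| ≤ (k + 1) * (√M * √E) :=
    hderiv (continuousOn_pdz hF) (setIntegral_pdz_sq_le_gradSq hF)
      fun p hp ↦ pdz_pow (hdiff p hp) (k + 1)
  calc ∫ p in R, (F p ^ (k + 1)) ^ 2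
      ≤ ((∫ p in R, |F p ^ (k + 1)|) / (b - a) + ∫ p in R, |pdr (fun q ↦ F q ^ (k + 1)) p|) *
          ∫ p in R, |pdz (fun q ↦ F q ^ (k + 1)) p| :=
        setIntegral_sq_le_mul_setIntegral_abs_pdz hab (fun p hp ↦ (hF p hp).pow (k + 1))
          (by simpa using hzero)
    _ ≤ ((d - c) * (√M * √E) / (b - a) + (k + 1) * (√M * √E)) * ((k + 1) * (√M * √E)) := by
        gcongr
    _ = (k + 1) * (k + 1 + (d - c) / (b - a)) * (√M ^ 2 * √E ^ 2) := by ring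
    _ = (k + 1) * (k + 1 + (d - c) / (b - a)) * (M * E) := by
        rw [Real.sq_sqrt hM, Real.sq_sqrt hE]

lemma setIntegral_pow_six_le (hab : a < b) (hcd : c ≤ d)
    (hF : ∀ p ∈ Icc a b ×ˢ Icc c d, ContDiffAt ℝ 1 F p)
    (hzero : ∀ᵐ r ∂volume.restrict (Icc a b), ∃ z ∈ Icc c d, F (r, z) = 0) :
    ∫ p in Icc a b ×ˢ Icc c d, F p ^ 6 ≤
      6 * (2 + (d - c) / (b - a)) * (3 + (d - c) / (b - a)) * (d - c) ^ 2 *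
        (∫ p in Icc a b ×ˢ Icc c d, gradSq F p) ^ 3 := by
  set R := Icc a b ×ˢ Icc c d
  set E := ∫ p in R, gradSq F p
  set ρ := (d - c) / (b - a)
  have : 0 ≤ ρ := div_nonneg (sub_nonneg.2 hcd) (sub_nonneg.2 hab.le)
  have hE : 0 ≤ E := integral_nonneg (gradSq_nonneg F)
  have hfour : ∫ p in R, (F p ^ 2) ^ 2 ≤ 2 * (2 + ρ) * ((∫ p in R, F p ^ 2) * E) := by
    refine (setIntegral_pow_succ_sq_le hab hcd hF hzero 1).trans_eq ?_
    simp only [pow_one, Nat.cast_one]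
    ring
  have hsix : ∫ p in R, (F p ^ 3) ^ 2 ≤ 3 * (3 + ρ) * ((∫ p in R, (F p ^ 2) ^ 2) * E) := by
    refine (setIntegral_pow_succ_sq_le hab hcd hF hzero 2).trans_eq ?_
    simp only [Nat.cast_ofNat]
    ring
  calc ∫ p in R, F p ^ 6 = ∫ p in R, (F p ^ 3) ^ 2 := by simp only [← pow_mul]
    _ ≤ 3 * (3 + ρ) * ((∫ p in R, (F p ^ 2) ^ 2) * E) := hsix
    _ ≤ 3 * (3 + ρ) * (2 * (2 + ρ) * ((d - c) ^ 2 * E * E) * E) := by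
        gcongr
        exact hfour.trans (by gcongr; exact setIntegral_sq_le_gradSq hF hzero)
    _ = 6 * (2 + ρ) * (3 + ρ) * (d - c) ^ 2 * E ^ 3 := by ring

end Rectangle

section CrossSection

variable {F g : ℝ × ℝ → ℝ} {β r : ℝ} {i j m : ℕ}

lemma rW_pos (j : ℕ) : 0 < rW j := by
  unfold rW
  positivity

lemma rW_antitone : Antitone rW := fun _ _ hij ↦
  Real.rpow_le_rpow_of_exponent_le one_le_two (neg_le_neg (Nat.cast_le.2 hij))

lemma rW_zero : rW 0 = 1 := by simp [rW]

lemma rW_pred (hj : 1 ≤ j) : rW (j - 1) = 2 * rW j := by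
  rw [rW, rW, Nat.cast_pred hj, neg_sub, sub_eq_neg_add, add_comm, Real.rpow_add two_pos,
    Real.rpow_one]

lemma rW_lt_rW_pred (hj : 1 ≤ j) : rW j < rW (j - 1) := by
  linarith [rW_pred hj, rW_pos j]

lemma hH_pos (β : ℝ) (j : ℕ) : 0 < hH β j := by
  unfold hH
  positivity

lemma hH_le_rW_pred (hβ : 1 ≤ β) (hj : 1 ≤ j) : hH β j ≤ rW (j - 1) := by
  refine Real.rpow_le_rpow_of_exponent_le one_le_two ?_
  rw [Nat.cast_pred hj, neg_mul]
  exact neg_le_neg (le_mul_of_one_le_left (sub_nonneg.2 (Nat.one_le_cast.2 hj)) hβ)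

lemma eq_of_mem_Ico_rW (hi : r ∈ Ico (rW i) (rW (i - 1))) (hj : r ∈ Ico (rW j) (rW (j - 1))) :
    i = j := by
  have hle {i j : ℕ} (hi : rW i ≤ r) (hj : r < rW (j - 1)) : j ≤ i := by
    by_contra! hij
    exact (hi.trans_lt hj).not_ge (rW_antitone (Nat.le_pred_of_lt hij))
  exact le_antisymm (hle hj.1 hi.2) (hle hi.1 hj.2)

lemma exists_mem_Ico_rW (hr : r ∈ Ico (rW m) 1) :
    ∃ j ∈ Finset.Icc 1 m, r ∈ Ico (rW j) (rW (j - 1)) := by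
  have hex : ∃ j, rW j ≤ r := ⟨m, hr.1⟩
  classical
  have hpos : 1 ≤ Nat.find hex := by
    rw [Nat.one_le_iff_ne_zero, Ne, Nat.find_eq_zero, rW_zero, not_le]
    exact hr.2
  exact ⟨Nat.find hex, Finset.mem_Icc.2 ⟨hpos, Nat.find_min' hex hr.1⟩, Nat.find_spec hex,
    not_le.1 (Nat.find_min hex (Nat.sub_lt hpos one_pos))⟩

lemma Srect_eq_prod (β : ℝ) (j : ℕ) :
    Srect β j = Ico (rW j) (rW (j - 1)) ×ˢ Ioo 0 (hH β j) :=
  Set.ext fun _ ↦ and_assoc.symm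

lemma measurableSet_Srect (β : ℝ) (j : ℕ) : MeasurableSet (Srect β j) := by
  rw [Srect_eq_prod]
  exact measurableSet_Ico.prod measurableSet_Ioo

lemma pairwise_disjoint_Srect (β : ℝ) : Pairwise (Function.onFun Disjoint (Srect β)) :=
  fun _ _ hij ↦ Set.disjoint_left.2 fun _ hi hj ↦
    hij (eq_of_mem_Ico_rW ⟨hi.1, hi.2.1⟩ ⟨hj.1, hj.2.1⟩)

lemma closure_Srect (β : ℝ) (hj : 1 ≤ j) :
    closure (Srect β j) = Icc (rW j) (rW (j - 1)) ×ˢ Icc 0 (hH β j) := by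
  rw [Srect_eq_prod, closure_prod_eq, closure_Ico (rW_lt_rW_pred hj).ne,
    closure_Ioo (hH_pos β j).ne]

lemma Srect_ae_eq_closure (β : ℝ) (hj : 1 ≤ j) : Srect β j =ᵐ[volume] closure (Srect β j) := by
  rw [closure_Srect β hj, Srect_eq_prod]
  exact Measure.set_prod_ae_eq Ico_ae_eq_Icc Ioo_ae_eq_Icc

lemma closure_Srect_subset (β : ℝ) (hj : j ∈ Finset.Icc 1 m) :
    closure (Srect β j) ⊆ closure (Ddom β m) :=
  closure_mono (Set.subset_biUnion_of_mem (u := Srect β) (s := {j | j ∈ Finset.Icc 1 m}) hj)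

lemma integrableOn_Srect (hj : 1 ≤ j) (hg : ContinuousOn g (closure (Srect β j))) :
    IntegrableOn g (Srect β j) := by
  rw [closure_Srect β hj] at hg
  exact (integrableOn_rectangle hg).mono_set (closure_Srect β hj ▸ subset_closure)

lemma vertSeg_eq_Ioo (hj : j ∈ Finset.Icc 1 m) (hr : r ∈ Ico (rW j) (rW (j - 1))) :
    vertSeg β m r = Ioo 0 (hH β j) := by
  ext z
  simp only [vertSeg, Ddom, mem_ofPred_eq, mem_iUnion, exists_prop]
  constructor
  · rintro ⟨i, -, hi⟩
    rw [eq_of_mem_Ico_rW hr ⟨hi.1, hi.2.1⟩]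
    exact hi.2.2
  · exact fun hz ↦ ⟨j, hj, hr.1, hr.2, hz⟩

lemma closure_vertSeg (hj : j ∈ Finset.Icc 1 m) (hr : r ∈ Ico (rW j) (rW (j - 1))) :
    closure (vertSeg β m r) = Icc 0 (hH β j) := by
  rw [vertSeg_eq_Ioo hj hr, closure_Ioo (hH_pos β j).ne]

lemma exists_eq_zero_of_bdH_or_integral_eq_zero (hF : ContinuousOn F (closure (Ddom β m)))
    (hbd : (∀ p ∈ bdH β m, F p = 0) ∨ ∀ c ∈ Ioo (rW m) 1, ∫ z in vertSeg β m c, F (c, z) = 0) :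
    ∀ c ∈ Ioo (rW m) 1, ∃ z ∈ closure (vertSeg β m c), F (c, z) = 0 := by
  intro c hc
  obtain ⟨j, hj, hcj⟩ := exists_mem_Ico_rW (Ioo_subset_Ico_self hc)
  rw [closure_vertSeg hj hcj]
  rcases hbd with hboundary | hmean
  · exact ⟨0, ⟨le_rfl, (hH_pos β j).le⟩, hboundary _ (.inl ⟨rfl, hc.1.le, hc.2.le⟩)⟩
  · have hFj := hF.mono (closure_Srect_subset β hj)
    rw [closure_Srect β (Finset.mem_Icc.1 hj).1] at hFj
    have hmean_c := hmean c hc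
    rw [vertSeg_eq_Ioo hj hcj] at hmean_c
    obtain ⟨z, hz, hFz⟩ := exists_mem_Ioo_eq_zero_of_integral_eq_zero (hH_pos β j)
      (continuousOn_vertical_slice hFj (Ico_subset_Icc_self hcj)) hmean_c
    exact ⟨z, Ioo_subset_Icc_self hz, hFz⟩

lemma setIntegral_Srect_pow_six_le (hβ : 1 ≤ β) (hj : 1 ≤ j)
    (hF : ∀ p ∈ closure (Srect β j), ContDiffAt ℝ 1 F p)
    (hzero : ∀ r ∈ Ioo (rW j) (rW (j - 1)), ∃ z ∈ Icc 0 (hH β j), F (r, z) = 0) :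
    ∫ p in Srect β j, F p ^ 6 ≤ 480 * rW j ^ 2 * (∫ p in Srect β j, gradSq F p) ^ 3 := by
  simp only [setIntegral_congr_set (Srect_ae_eq_closure β hj)]
  rw [closure_Srect β hj] at hF ⊢
  have hzero_ae :
      ∀ᵐ r ∂volume.restrict (Icc (rW j) (rW (j - 1))), ∃ z ∈ Icc 0 (hH β j), F (r, z) = 0 := by
    rw [← Measure.restrict_congr_set Ioo_ae_eq_Icc]
    exact (ae_restrict_mem measurableSet_Ioo).mono hzero
  have hw : 0 < rW j := rW_pos j
  have hh : 0 < hH β j := hH_pos β j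
  have hheight : hH β j ≤ 2 * rW j := rW_pred hj ▸ hH_le_rW_pred hβ hj
  have hratio : hH β j / rW j ≤ 2 := (div_le_iff₀ hw).2 hheight
  have hwidth : rW (j - 1) - rW j = rW j := by linarith [rW_pred hj]
  have hlocal := setIntegral_pow_six_le (rW_lt_rW_pred hj) hh.le hF hzero_ae
  rw [hwidth, sub_zero] at hlocal
  set E := ∫ p in Icc (rW j) (rW (j - 1)) ×ˢ Icc 0 (hH β j), gradSq F p
  have hE : 0 ≤ E := integral_nonneg (gradSq_nonneg F)
  calc _ ≤ 6 * (2 + hH β j / rW j) * (3 + hH β j / rW j) * hH β j ^ 2 * E ^ 3 := hlocal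
    _ ≤ 6 * (2 + 2) * (3 + 2) * (2 * rW j) ^ 2 * E ^ 3 := by gcongr
    _ = 480 * rW j ^ 2 * E ^ 3 := by ring

lemma setIntegral_Srect_mul_weight_le (hj : 1 ≤ j) (hg : ContinuousOn g (closure (Srect β j)))
    (hg₀ : ∀ p, 0 ≤ g p) :
    ∫ p in Srect β j, g p * (2 * π * p.1) ≤ (∫ p in Srect β j, g p) * (2 * π * (2 * rW j)) := by
  rw [← integral_mul_const]
  refine setIntegral_mono_on (integrableOn_Srect hj (hg.mul (by fun_prop)))
    (integrableOn_Srect hj (hg.mul continuousOn_const)) (measurableSet_Srect β j) fun p hp ↦ ?_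
  rw [← rW_pred hj]
  have := hg₀ p
  have := hp.2.1
  gcongr

lemma mul_weight_le_setIntegral_Srect (hj : 1 ≤ j) (hg : ContinuousOn g (closure (Srect β j)))
    (hg₀ : ∀ p, 0 ≤ g p) :
    (∫ p in Srect β j, g p) * (2 * π * rW j) ≤ ∫ p in Srect β j, g p * (2 * π * p.1) := by
  rw [← integral_mul_const]
  refine setIntegral_mono_on (integrableOn_Srect hj (hg.mul continuousOn_const))
    (integrableOn_Srect hj (hg.mul (by fun_prop))) (measurableSet_Srect β j) fun p hp ↦ ?_
  have := hg₀ p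
  have := hp.1
  gcongr

lemma setIntegral_Srect_pow_six_mul_weight_le (hβ : 1 ≤ β) (hj : 1 ≤ j)
    (hF : ∀ p ∈ closure (Srect β j), ContDiffAt ℝ 1 F p)
    (hzero : ∀ r ∈ Ioo (rW j) (rW (j - 1)), ∃ z ∈ Icc 0 (hH β j), F (r, z) = 0) :
    ∫ p in Srect β j, F p ^ 6 * (2 * π * p.1) ≤
      480 * (∫ p in Srect β j, gradSq F p * (2 * π * p.1)) ^ 3 := by
  set E := ∫ p in Srect β j, gradSq F p
  have hE : 0 ≤ E := integral_nonneg (gradSq_nonneg F)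
  have hw : 0 < rW j := rW_pos j
  have hpi : 4 * π ≤ (2 * π) ^ 3 := by
    have hsq : 1 ≤ π ^ 2 := one_le_pow₀ (one_le_two.trans Real.two_le_pi)
    calc 4 * π ≤ 8 * π * π ^ 2 := by nlinarith [Real.pi_pos]
      _ = (2 * π) ^ 3 := by ring
  calc ∫ p in Srect β j, F p ^ 6 * (2 * π * p.1)
      ≤ (∫ p in Srect β j, F p ^ 6) * (2 * π * (2 * rW j)) :=
        setIntegral_Srect_mul_weight_le hj ((continuousOn_of_forall_contDiffAt hF).pow 6)
          fun p ↦ Even.pow_nonneg (by decide) (F p)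
    _ ≤ 480 * rW j ^ 2 * E ^ 3 * (2 * π * (2 * rW j)) := by
        gcongr
        exact setIntegral_Srect_pow_six_le hβ hj hF hzero
    _ = 480 * (rW j ^ 3 * E ^ 3) * (4 * π) := by ring
    _ ≤ 480 * (rW j ^ 3 * E ^ 3) * (2 * π) ^ 3 := by gcongr
    _ = 480 * (E * (2 * π * rW j)) ^ 3 := by ring
    _ ≤ 480 * (∫ p in Srect β j, gradSq F p * (2 * π * p.1)) ^ 3 := by
        gcongr
        exact mul_weight_le_setIntegral_Srect hj (continuousOn_gradSq hF) (gradSq_nonneg F)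

lemma cylIntegral_eq_sum (hg : ContinuousOn g (closure (Ddom β m))) :
    cylIntegral β m g = ∑ j ∈ Finset.Icc 1 m, ∫ p in Srect β j, g p * (2 * π * p.1) :=
  integral_biUnion_finset _ (fun j _ ↦ measurableSet_Srect β j)
    ((pairwise_disjoint_Srect β).set_pairwise _) fun j hj ↦
      integrableOn_Srect (Finset.mem_Icc.1 hj).1
        ((hg.mul (by fun_prop)).mono (closure_Srect_subset β hj))

lemma setIntegral_Srect_mul_weight_nonneg (hg₀ : ∀ p, 0 ≤ g p) :
    0 ≤ ∫ p in Srect β j, g p * (2 * π * p.1) :=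
  setIntegral_nonneg (measurableSet_Srect β j) fun p hp ↦
    mul_nonneg (hg₀ p) (mul_nonneg two_pi_pos.le ((rW_pos j).le.trans hp.1))

lemma cylIntegral_nonneg (hg : ContinuousOn g (closure (Ddom β m))) (hg₀ : ∀ p, 0 ≤ g p) :
    0 ≤ cylIntegral β m g := by
  rw [cylIntegral_eq_sum hg]
  exact Finset.sum_nonneg fun _ _ ↦ setIntegral_Srect_mul_weight_nonneg hg₀

lemma cylIntegral_pow_six_le (hβ : 1 ≤ β) (hF : ∀ p ∈ closure (Ddom β m), ContDiffAt ℝ 1 F p)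
    (hzero : ∀ c ∈ Ioo (rW m) 1, ∃ z ∈ closure (vertSeg β m c), F (c, z) = 0) :
    cylIntegral β m (fun p ↦ F p ^ 6) ≤ 480 * cylIntegral β m (gradSq F) ^ 3 := by
  rw [cylIntegral_eq_sum ((continuousOn_of_forall_contDiffAt hF).fun_pow 6),
    cylIntegral_eq_sum (continuousOn_gradSq hF)]
  calc ∑ j ∈ Finset.Icc 1 m, ∫ p in Srect β j, F p ^ 6 * (2 * π * p.1)
      ≤ ∑ j ∈ Finset.Icc 1 m, 480 * (∫ p in Srect β j, gradSq F p * (2 * π * p.1)) ^ 3 := by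
        refine Finset.sum_le_sum fun j hj ↦ ?_
        obtain ⟨hj₁, hjm⟩ := Finset.mem_Icc.1 hj
        refine setIntegral_Srect_pow_six_mul_weight_le hβ hj₁
          (fun p hp ↦ hF p (closure_Srect_subset β hj hp)) fun r hr ↦ ?_
        rw [← closure_vertSeg hj (Ioo_subset_Ico_self hr)]
        exact hzero r ⟨(rW_antitone hjm).trans_lt hr.1,
          hr.2.trans_le (rW_zero ▸ rW_antitone (Nat.zero_le _))⟩
    _ ≤ 480 * (∑ j ∈ Finset.Icc 1 m, ∫ p in Srect β j, gradSq F p * (2 * π * p.1)) ^ 3 := by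
        rw [← Finset.mul_sum]
        gcongr
        exact sum_pow_succ_le_pow_succ_sum
          (fun _ _ ↦ setIntegral_Srect_mul_weight_nonneg (gradSq_nonneg F)) 2

end CrossSection

theorem uniform_sobolev_six_general {β : ℝ} (hβ : 1 ≤ β) {m : ℕ} {F : ℝ × ℝ → ℝ}
    (hF : ∀ p ∈ closure (Ddom β m), ContDiffAt ℝ 1 F p)
    (hzero : ∀ c ∈ Ioo (rW m) 1, ∃ z ∈ closure (vertSeg β m c), F (c, z) = 0) :
    (cylIntegral β m fun p ↦ |F p| ^ (6 : ℕ)) ^ ((1 : ℝ) / 6) ≤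
      480 ^ ((1 : ℝ) / 6) *
        (cylIntegral β m fun p ↦ (pdr F p) ^ 2 + (pdz F p) ^ 2) ^ ((1 : ℝ) / 2) := by
  have hsix : 0 ≤ cylIntegral β m (fun p ↦ F p ^ 6) :=
    cylIntegral_nonneg ((continuousOn_of_forall_contDiffAt hF).pow 6)
      fun p ↦ Even.pow_nonneg (by decide) (F p)
  have hgrad : 0 ≤ cylIntegral β m (gradSq F) :=
    cylIntegral_nonneg (continuousOn_gradSq hF) (gradSq_nonneg F)
  calc (cylIntegral β m fun p ↦ |F p| ^ 6) ^ ((1 : ℝ) / 6)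
      = cylIntegral β m (fun p ↦ F p ^ 6) ^ ((1 : ℝ) / 6) := by
        simp only [Even.pow_abs (show Even 6 by decide)]
    _ ≤ (480 * cylIntegral β m (gradSq F) ^ 3) ^ ((1 : ℝ) / 6) :=
        Real.rpow_le_rpow hsix (cylIntegral_pow_six_le hβ hF hzero) (by norm_num)
    _ = 480 ^ ((1 : ℝ) / 6) * cylIntegral β m (gradSq F) ^ ((1 : ℝ) / 2) := by
        rw [Real.mul_rpow (by norm_num) (by positivity), ← Real.rpow_natCast_mul hgrad]
        norm_num

/-- Uniform Sobolev inequality on `D_m` with exponent 6, for axially symmetric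
`C¹` functions on a neighborhood of the closure of `D_m` that either vanish on the horizontal
boundary or have vanishing vertical line integrals. -/
theorem uniform_sobolev_six :
    ∃ s₀ : ℝ, 0 < s₀ ∧
      ∀ (β : ℝ), 1 < β → β ≤ 1.1 →
      ∀ (m : ℕ), 1 ≤ m →
      ∀ F : ℝ × ℝ → ℝ,
        (∃ U : Set (ℝ × ℝ), IsOpen U ∧ closure (Ddom β m) ⊆ U ∧ ContDiffOn ℝ 1 F U) →
        ((∀ p ∈ bdH β m, F p = 0) ∨
          (∀ c ∈ Set.Ioo (rW m) 1, (∫ z in vertSeg β m c, F (c, z)) = 0)) →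
        (cylIntegral β m fun p => |F p| ^ (6 : ℕ)) ^ ((1 : ℝ) / 6) ≤
          s₀ * (cylIntegral β m fun p => (pdr F p) ^ 2 + (pdz F p) ^ 2) ^ ((1 : ℝ) / 2) := by
  refine ⟨480 ^ ((1 : ℝ) / 6), by positivity, fun β hβ _ m _ F ⟨U, hU, hcl, hF⟩ hbd ↦ ?_⟩
  have hF' : ∀ p ∈ closure (Ddom β m), ContDiffAt ℝ 1 F p := fun p hp ↦
    hF.contDiffAt (hU.mem_nhds (hcl hp))
  exact uniform_sobolev_six_general hβ.le hF'
    (exists_eq_zero_of_bdH_or_integral_eq_zero (continuousOn_of_forall_contDiffAt hF') hbd)
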